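/- Let R be a commutative ring, n ≥ 1 and N ≥ 1 integers such that n!·N (viewed in R) is a non-zero-divisor of R. Let f be a homogeneous polynomial of degree n in two variables X, Y over R which is invariant under both R-algebra substitutions (X, Y) ↦ (X, N·X + Y) and (X, Y) ↦ (X + N·Y, Y). Then f = 0. (Since the principal congruence subgroup Γ(N) contains the matrices [[1,N],[0,1]] and [[1,0],[N,1]], this shows that the Γ(N)-invariants of V_{n}(R) vanish for n ≥ 1.) -/

import Mathlib

open MvPolynomial

theorem aux_poly {R : Type*} [CommRing R] (n N : ℕ)
    (hreg : ((n.factorial * N : ℕ) : R) ∈ nonZeroDivisors R)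
    (g : Polynomial R) (hg : g.natDegree ≤ n)
    (h : Polynomial.taylor (N : R) g = g) : g.natDegree = 0 := by
  by_contra hd
  obtain ⟨d, hd⟩ := Nat.exists_eq_succ_of_ne_zero hd
  have h3 := congrArg (fun p => Polynomial.coeff p d) h
  simp only [Polynomial.taylor_coeff] at h3
  have h4 : (Polynomial.hasseDeriv d g).natDegree < 2 := by
    have := Polynomial.natDegree_hasseDeriv_le g d
    omega
  rw [Polynomial.eval_eq_sum_range' h4] at h3
  simp only [Finset.sum_range_succ, Finset.sum_range_zero, Polynomial.hasseDeriv_coeff] at h3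
  have h5 : g.coeff (d+1) * ((d + 1 : ℕ) * N : R) = 0 := by
    have e : (1 + d).choose d = d + 1 := by
      rw [add_comm, Nat.choose_succ_self_right]
    rw [e] at h3
    simp only [zero_add, Nat.choose_self, Nat.cast_one, one_mul, pow_zero, mul_one, pow_one,
      add_comm 1 d] at h3
    linear_combination h3
  have h6 : g.coeff (d+1) = 0 := by
    obtain ⟨k, hk⟩ : (d + 1) ∣ n.factorial := Nat.dvd_factorial (by omega) (by omega)
    refine (mem_nonZeroDivisors_iff.1 hreg).2 _ ?_
    rw [hk]
    push_cast at h5 ⊢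
    linear_combination (k : R) * h5
  have h7 : g.leadingCoeff = 0 := by
    rw [Polynomial.leadingCoeff, hd]; exact h6
  rw [Polynomial.leadingCoeff_eq_zero] at h7
  simp [h7] at hd

theorem aux_expand {R : Type*} [CommRing R] (f : MvPolynomial (Fin 2) R) (i : Fin 2) :
    aeval (fun k => if k = i then (Polynomial.X : Polynomial R) else 1) f
      = ∑ s ∈ f.support, Polynomial.C (f.coeff s) * Polynomial.X ^ (s i) := by
  rw [aeval_def, eval₂_eq']
  refine Finset.sum_congr rfl fun s _ => ?_
  fin_cases i <;> simp [Fin.prod_univ_two]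

theorem aux_deg {R : Type*} [CommRing R] {n : ℕ} {f : MvPolynomial (Fin 2) R}
    (hf : f.IsHomogeneous n) {s : Fin 2 →₀ ℕ} (hs : f.coeff s ≠ 0) : s 0 + s 1 = n := by
  have := hf hs
  rw [Finsupp.weight_apply, Finsupp.sum_fintype _ _ (by simp)] at this
  simpa [Fin.sum_univ_two] using this

theorem aux_natDegree {R : Type*} [CommRing R] {n : ℕ} {f : MvPolynomial (Fin 2) R}
    (hf : f.IsHomogeneous n) (i : Fin 2) :
    (aeval (fun k => if k = i then (Polynomial.X : Polynomial R) else 1) f).natDegree ≤ n := by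
  rw [aux_expand]
  refine Polynomial.natDegree_sum_le_of_forall_le _ _ fun s hs => ?_
  refine (Polynomial.natDegree_C_mul_X_pow_le _ _).trans ?_
  have := aux_deg hf (mem_support_iff.1 hs)
  fin_cases i <;> simp <;> omega

theorem aux_coeff {R : Type*} [CommRing R] {n : ℕ} {f : MvPolynomial (Fin 2) R}
    (hf : f.IsHomogeneous n) (i : Fin 2) {s : Fin 2 →₀ ℕ} (hs : f.coeff s ≠ 0) :
    (aeval (fun k => if k = i then (Polynomial.X : Polynomial R) else 1) f).coeff (s i)
      = f.coeff s := by
  rw [aux_expand, Polynomial.finsetSum_coeff, Finset.sum_eq_single s]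
  · simp
  · intro t ht hts
    rw [Polynomial.coeff_C_mul_X_pow, if_neg]
    intro h
    apply hts
    have a := aux_deg hf hs
    have b := aux_deg hf (mem_support_iff.1 ht)
    ext k
    fin_cases i <;> fin_cases k <;> simp at h ⊢ <;> omega
  · intro h
    simp [notMem_support_iff.1 h]

theorem aux_zero {R : Type*} [CommRing R] {n N : ℕ} {f : MvPolynomial (Fin 2) R}
    (hreg : ((n.factorial * N : ℕ) : R) ∈ nonZeroDivisors R)
    (hf : f.IsHomogeneous n) (i : Fin 2) {s : Fin 2 →₀ ℕ} (hs : f.coeff s ≠ 0)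
    (h : aeval (fun k => if k = i then X i + (N : MvPolynomial (Fin 2) R) * X (1 - i)
      else X k) f = f) : s i = 0 := by
  have key := aux_poly n N hreg _ (aux_natDegree hf i) (by
    have h' := congrArg
      (aeval (fun k => if k = i then (Polynomial.X : Polynomial R) else 1)) h
    rw [← AlgHom.comp_apply, comp_aeval] at h'
    rw [← Polynomial.taylorAlgHom_apply, ← AlgHom.comp_apply, comp_aeval]
    refine Eq.trans ?_ h'
    congr 2
    funext k
    fin_cases i <;> fin_cases k <;> simp)
  have := aux_coeff hf i hs
  by_contra h0
  apply hs
  rw [← this]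
  exact Polynomial.coeff_eq_zero_of_natDegree_lt (by omega)

/-- Let `R` be a commutative ring and `n, N ≥ 1` such that `n!·N` is a non-zero-divisor in
`R`. A homogeneous polynomial `f ∈ R[X,Y]` of degree `n` which satisfies both
`f(X, N·X + Y) = f(X, Y)` and `f(X + N·Y, Y) = f(X, Y)` (i.e. is invariant under the matrices
`[[1,N],[0,1]]` and `[[1,0],[N,1]]`, which lie in `Γ(N)`) is zero. -/
theorem vn_gammaN_invariants_eq_zero
    (R : Type*) [CommRing R] (n N : ℕ) (hn : 1 ≤ n) (hN : 1 ≤ N)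
    (hreg : ((n.factorial * N : ℕ) : R) ∈ nonZeroDivisors R)
    (f : MvPolynomial (Fin 2) R) (hf : f.IsHomogeneous n)
    (h1 : aeval ![(X 0 : MvPolynomial (Fin 2) R),
      (N : MvPolynomial (Fin 2) R) * X 0 + X 1] f = f)
    (h2 : aeval ![(X 0 : MvPolynomial (Fin 2) R) + (N : MvPolynomial (Fin 2) R) * X 1,
      (X 1 : MvPolynomial (Fin 2) R)] f = f) :
    f = 0 := by
  by_contra hne
  obtain ⟨s, hs⟩ := exists_coeff_ne_zero hne
  have a0 : s 0 = 0 := by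
    refine aux_zero hreg hf 0 hs (Eq.trans ?_ h2)
    congr 2
    funext k
    fin_cases k <;> simp
  have a1 : s 1 = 0 := by
    refine aux_zero hreg hf 1 hs (Eq.trans ?_ h1)
    congr 2
    funext k
    fin_cases k <;> simp [add_comm]
  have := aux_deg hf hs
  omega
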